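/- arXiv:1111.0431 — 5 statements merged into one kernel-verified Lean document; each statement's English description precedes it below -/
import Mathlib

section
/- If r ∈ ℝ is not an integer, then for every continuous 1-periodic function g : ℝ → ℂ there exists a differentiable 1-periodic function y : ℝ → ℂ such that y′(θ) − 2π√(−1) r y(θ) = g(θ) for all θ ∈ ℝ. -/
/-- If `r` is not an integer, then for every continuous 1-periodic
`g : ℝ → ℂ` there is a differentiable 1-periodic `y : ℝ → ℂ` with
`y′(θ) − 2π√(−1) r y(θ) = g(θ)` for all `θ`. -/
theorem twisted_deRham_surjective_of_not_integer (r : ℝ) (hr : ¬∃ n : ℤ, r = n)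
    (g : ℝ → ℂ) (hg : Continuous g) (hgper : ∀ θ : ℝ, g (θ + 1) = g θ) :
    ∃ y : ℝ → ℂ, Differentiable ℝ y ∧ (∀ θ : ℝ, y (θ + 1) = y θ) ∧
      ∀ θ : ℝ, deriv y θ - 2 * (Real.pi : ℂ) * Complex.I * (r : ℂ) * y θ = g θ := by
  obtain ⟨a, ha⟩ : ∃ a : ℂ, a = 2 * (Real.pi : ℂ) * Complex.I * (r : ℂ) := ⟨_, rfl⟩
  have hne : 1 - Complex.exp a ≠ 0 := by
    intro h
    have h1 : Complex.exp a = 1 := (sub_eq_zero.mp h).symm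
    obtain ⟨n, hn⟩ := Complex.exp_eq_one_iff.mp h1
    apply hr
    refine ⟨n, ?_⟩
    have h2 : (2 * (Real.pi : ℂ) * Complex.I) * (r : ℂ) = (2 * (Real.pi : ℂ) * Complex.I) * n := by
      rw [← ha, hn]; ring
    have h3 := mul_left_cancel₀ Complex.two_pi_I_ne_zero h2
    exact_mod_cast h3
  rw [← ha]
  let f : ℝ → ℂ := fun s => Complex.exp (-(a * s)) * g s
  have hf : Continuous f := by fun_prop
  let F : ℝ → ℂ := fun t => ∫ s in (0:ℝ)..t, f s
  have hF : ∀ t, HasDerivAt F (f t) t := fun t => hf.integral_hasStrictDerivAt 0 t |>.hasDerivAt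
  have hshift : ∀ t, F (t + 1) = F 1 + Complex.exp (-a) * F t := by
    intro t
    have h1 : F (t + 1) = F 1 + ∫ s in (1:ℝ)..(t+1), f s :=
      (intervalIntegral.integral_add_adjacent_intervals
        (hf.intervalIntegrable _ _) (hf.intervalIntegrable _ _)).symm
    have h2 : ∫ s in (0:ℝ)..t, f (s + 1) = ∫ s in (1:ℝ)..(t+1), f s := by
      rw [intervalIntegral.integral_comp_add_right, zero_add]
    rw [h1, ← h2, ← intervalIntegral.integral_const_mul]
    congr 2
    ext s
    simp only [f, hgper]
    rw [← mul_assoc, ← Complex.exp_add]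
    congr 2
    push_cast
    ring
  let C : ℂ := Complex.exp a * F 1 / (1 - Complex.exp a)
  have hC : Complex.exp a * (C + F 1) = C := by
    simp only [C]
    field_simp
    ring
  let y : ℝ → ℂ := fun t => Complex.exp (a * t) * (C + F t)
  have hy : ∀ t, HasDerivAt y (a * y t + g t) t := by
    intro t
    have h1 : HasDerivAt (fun t : ℝ => Complex.exp (a * t)) (Complex.exp (a * t) * (a * 1)) t :=
      ((Complex.ofRealCLM.hasDerivAt (x := t)).const_mul a).cexp
    have h2 := h1.mul ((hF t).const_add C)
    refine h2.congr_deriv ?_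
    simp only [y, f]
    have h3 : Complex.exp (a * t) * Complex.exp (-(a * t)) = 1 := by
      rw [← Complex.exp_add]; simp
    linear_combination g t * h3
  refine ⟨y, fun t => (hy t).differentiableAt, fun t => ?_, fun t => ?_⟩
  · simp only [y, hshift]
    have h3 : Complex.exp a * Complex.exp (-a) = 1 := by
      rw [← Complex.exp_add]; simp
    have h4 : Complex.exp (a * ((t + 1 : ℝ) : ℂ)) = Complex.exp (a * t) * Complex.exp a := by
      rw [← Complex.exp_add]; congr 1; push_cast; ring
    rw [h4]
    linear_combination Complex.exp (a * t) * hC + Complex.exp (a * t) * F t * h3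
  · rw [(hy t).deriv]; ring
end

section
/- If r ∈ ℤ, then there is no differentiable 1-periodic function y : ℝ → ℂ satisfying y′(θ) − 2π√(−1) r y(θ) = exp(2π√(−1) r θ) for all θ ∈ ℝ. -/
/-- If `r` is an integer `n`, there is no differentiable 1-periodic
`y : ℝ → ℂ` with `y′(θ) − 2π√(−1) n y(θ) = exp (2π√(−1) n θ)` for all `θ`. -/
theorem twisted_deRham_not_surjective_of_integer (n : ℤ) :
    ¬∃ y : ℝ → ℂ, Differentiable ℝ y ∧ (∀ θ : ℝ, y (θ + 1) = y θ) ∧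
      ∀ θ : ℝ, deriv y θ - 2 * (Real.pi : ℂ) * Complex.I * (n : ℂ) * y θ
        = Complex.exp (2 * (Real.pi : ℂ) * Complex.I * (n : ℂ) * (θ : ℂ)) := by
  rintro ⟨y, hd, hp, h⟩
  set c : ℂ := 2 * (Real.pi : ℂ) * Complex.I * (n : ℂ) with hc
  have hg : ∀ θ : ℝ, HasDerivAt (fun t : ℝ => Complex.exp (-c * (t : ℂ)) * y t - (t : ℂ)) 0 θ := by
    intro θ
    have h0 : HasDerivAt (fun t : ℝ => (t : ℂ)) 1 θ := Complex.ofRealCLM.hasDerivAt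
    have h1 := (((h0.const_mul (-c)).cexp).mul (hd θ).hasDerivAt).sub h0
    refine h1.congr_deriv ?_
    have h2 : deriv y θ = Complex.exp (c * θ) + c * y θ := by
      rw [← h θ]; ring
    have h3 : Complex.exp (-c * θ) * Complex.exp (c * θ) = 1 := by
      rw [← Complex.exp_add]; simp
    rw [h2]
    linear_combination h3
  have hk := is_const_of_deriv_eq_zero (fun θ => (hg θ).differentiableAt)
    (fun θ => (hg θ).deriv) 1 0
  have he : Complex.exp (-c) = 1 := by
    rw [Complex.exp_eq_one_iff]
    exact ⟨-n, by rw [hc]; push_cast; ring⟩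
  have hy : y 1 = y 0 := by simpa using hp 0
  simp [he, hy] at hk
end

section
/- Let m, γ ∈ ℤ and r ∈ ℝ. There exists a differentiable function y : ℝ → ℂ with y(0) ≠ 0, satisfying y′(θ) = 2π√(−1) r y(θ) for all θ ∈ ℝ and exp(−2π√(−1) m φ)·y(θ+φ) = exp(2π√(−1) γ φ)·y(θ) for all θ, φ ∈ ℝ, if and only if r = m + γ. Moreover any such y is automatically 1-periodic. -/
theorem aux_deriv (c d : ℂ) (θ : ℝ) :
    HasDerivAt (fun t : ℝ => Complex.exp (c * (t : ℂ)) * d) (c * (Complex.exp (c * (θ : ℂ)) * d)) θ := by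
  have h1 : HasDerivAt (fun t : ℝ => c * (t : ℂ)) (c * 1) θ :=
    (Complex.ofRealCLM.hasDerivAt (x := θ)).const_mul c
  have h2 := (h1.cexp).mul_const d
  exact h2.congr_deriv (by ring)

theorem aux_weight (m γ : ℤ) (y : ℝ → ℂ)
    (h : ∀ θ φ : ℝ, Complex.exp (-(2 * (Real.pi : ℂ) * Complex.I * (m : ℂ) * (φ : ℂ)))
            * y (θ + φ)
          = Complex.exp (2 * (Real.pi : ℂ) * Complex.I * (γ : ℂ) * (φ : ℂ)) * y θ) (θ φ : ℝ) :
    y (θ + φ) = Complex.exp (2 * (Real.pi : ℂ) * Complex.I * ((m : ℂ) + γ) * (φ : ℂ)) * y θ := by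
  have e : 2 * (Real.pi : ℂ) * Complex.I * ((m : ℂ) + γ) * (φ : ℂ)
      = 2 * (Real.pi : ℂ) * Complex.I * (m : ℂ) * (φ : ℂ)
        + 2 * (Real.pi : ℂ) * Complex.I * (γ : ℂ) * (φ : ℂ) := by ring
  rw [e, Complex.exp_add, mul_assoc, ← h θ φ, ← mul_assoc, ← Complex.exp_add]
  simp

/-- For `m, γ ∈ ℤ` and `r ∈ ℝ`, a differentiable `y : ℝ → ℂ` with
`y 0 ≠ 0`, `y′(θ) = 2π√(−1) r y(θ)`, and
`exp(−2π√(−1) m φ)·y(θ+φ) = exp(2π√(−1) γ φ)·y(θ)` for all `θ, φ`, exists iff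
`r = m + γ`; moreover any such `y` is automatically 1-periodic. -/
theorem weight_section_exists_iff (m γ : ℤ) (r : ℝ) :
    ((∃ y : ℝ → ℂ, Differentiable ℝ y ∧ y 0 ≠ 0 ∧
        (∀ θ : ℝ, deriv y θ = 2 * (Real.pi : ℂ) * Complex.I * (r : ℂ) * y θ) ∧
        (∀ θ φ : ℝ, Complex.exp (-(2 * (Real.pi : ℂ) * Complex.I * (m : ℂ) * (φ : ℂ)))
            * y (θ + φ)
          = Complex.exp (2 * (Real.pi : ℂ) * Complex.I * (γ : ℂ) * (φ : ℂ)) * y θ))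
      ↔ r = (m : ℝ) + (γ : ℝ))
    ∧
    (∀ y : ℝ → ℂ, Differentiable ℝ y → y 0 ≠ 0 →
      (∀ θ : ℝ, deriv y θ = 2 * (Real.pi : ℂ) * Complex.I * (r : ℂ) * y θ) →
      (∀ θ φ : ℝ, Complex.exp (-(2 * (Real.pi : ℂ) * Complex.I * (m : ℂ) * (φ : ℂ)))
          * y (θ + φ)
        = Complex.exp (2 * (Real.pi : ℂ) * Complex.I * (γ : ℂ) * (φ : ℂ)) * y θ) →
      ∀ θ : ℝ, y (θ + 1) = y θ) := by
  refine ⟨⟨?_, ?_⟩, ?_⟩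
  · rintro ⟨y, -, h0, hd, hw⟩
    have hy : y = fun t : ℝ =>
        Complex.exp (2 * (Real.pi : ℂ) * Complex.I * ((m : ℂ) + γ) * (t : ℂ)) * y 0 := by
      funext t
      simpa using aux_weight m γ y hw 0 t
    have h1 := (aux_deriv (2 * (Real.pi : ℂ) * Complex.I * ((m : ℂ) + γ)) (y 0) 0).deriv
    rw [← hy, hd 0] at h1
    simp only [Complex.ofReal_zero, mul_zero, Complex.exp_zero, one_mul] at h1
    have h2 := mul_left_cancel₀ Complex.two_pi_I_ne_zero (mul_right_cancel₀ h0 h1)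
    exact_mod_cast h2
  · intro hr
    have hD := aux_deriv (2 * (Real.pi : ℂ) * Complex.I * (r : ℂ)) 1
    refine ⟨_, fun θ => (hD θ).differentiableAt, by simp, fun θ => (hD θ).deriv, ?_⟩
    intro θ φ
    simp only [mul_one]
    rw [← Complex.exp_add, ← Complex.exp_add, hr]
    congr 1
    push_cast
    ring
  · intro y _ _ _ hw θ
    rw [aux_weight m γ y hw θ 1]
    have : Complex.exp (2 * (Real.pi : ℂ) * Complex.I * ((m : ℂ) + γ) * ((1 : ℝ) : ℂ)) = 1 := by
      rw [Complex.exp_eq_one_iff]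
      exact ⟨m + γ, by push_cast; ring⟩
    rw [this, one_mul]
end

section
/- Let k ≥ 1 be an integer and m, γ ∈ ℤ. The set of r in the closed interval [0, k] for which there exists a differentiable y : ℝ → ℂ with y(0) ≠ 0, y′(θ) = 2π√(−1) r y(θ) for all θ, and exp(−2π√(−1) m φ) y(θ+φ) = exp(2π√(−1) γ φ) y(θ) for all θ, φ ∈ ℝ, is equal to the singleton {m + γ} if 0 ≤ m + γ ≤ k, and is empty otherwise. -/
theorem expDeriv (c : ℂ) (θ : ℝ) :
    HasDerivAt (fun t : ℝ => Complex.exp (c * (t : ℂ))) (c * Complex.exp (c * (θ : ℂ))) θ := by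
  have h1 : HasDerivAt (fun t : ℝ => c * (t : ℂ)) c θ := by
    simpa using (Complex.ofRealCLM.hasDerivAt (x := θ)).const_mul c
  simpa [mul_comm] using h1.cexp

theorem weight_key (m γ : ℤ) (r : ℝ) :
    (∃ y : ℝ → ℂ, Differentiable ℝ y ∧ y 0 ≠ 0 ∧
        (∀ θ : ℝ, deriv y θ = 2 * (Real.pi : ℂ) * Complex.I * (r : ℂ) * y θ) ∧
        (∀ θ φ : ℝ, Complex.exp (-(2 * (Real.pi : ℂ) * Complex.I * (m : ℂ) * (φ : ℂ)))
            * y (θ + φ)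
          = Complex.exp (2 * (Real.pi : ℂ) * Complex.I * (γ : ℂ) * (φ : ℂ)) * y θ)) ↔
      r = ((m + γ : ℤ) : ℝ) := by
  constructor
  · rintro ⟨y, -, h0, hd, hw⟩
    have hy : y = fun t : ℝ =>
        Complex.exp (2 * (Real.pi : ℂ) * Complex.I * ((m : ℂ) + γ) * (t : ℂ)) * y 0 := by
      funext t
      have h := hw 0 t
      rw [zero_add, Complex.exp_neg, inv_mul_eq_iff_eq_mul₀ (Complex.exp_ne_zero _),
        ← mul_assoc, ← Complex.exp_add] at h
      rw [h]
      congr 2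
      ring
    have h1 := ((expDeriv (2 * (Real.pi : ℂ) * Complex.I * ((m : ℂ) + γ)) 0).mul_const
      (y 0)).deriv
    rw [← hy, hd 0] at h1
    have h2 : (2 * (Real.pi : ℂ) * Complex.I) * (r : ℂ) =
        (2 * (Real.pi : ℂ) * Complex.I) * ((m : ℂ) + γ) := by
      apply mul_right_cancel₀ h0
      simpa using h1
    have h3 := mul_left_cancel₀ Complex.two_pi_I_ne_zero h2
    exact_mod_cast h3
  · rintro rfl
    refine ⟨fun t : ℝ => Complex.exp
      (2 * (Real.pi : ℂ) * Complex.I * (((m + γ : ℤ) : ℝ) : ℂ) * (t : ℂ)),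
      fun t => (expDeriv _ t).differentiableAt, Complex.exp_ne_zero _,
      fun t => (expDeriv _ t).deriv, fun θ φ => ?_⟩
    simp only [← Complex.exp_add]
    congr 1
    push_cast
    ring

/-- For an integer `k ≥ 1` and `m, γ ∈ ℤ`, the set of `r ∈ [0, k]`
admitting a differentiable `y : ℝ → ℂ` with `y 0 ≠ 0`, `y′ = 2π√(−1) r y`, and
`exp(−2π√(−1) m φ) y(θ+φ) = exp(2π√(−1) γ φ) y(θ)` for all `θ, φ`, is `{m + γ}`
if `0 ≤ m + γ ≤ k` and is empty otherwise. -/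
theorem weight_orbit_unique (k : ℕ) (hk : 1 ≤ k) (m γ : ℤ) :
    {r : ℝ | r ∈ Set.Icc (0 : ℝ) (k : ℝ) ∧
      ∃ y : ℝ → ℂ, Differentiable ℝ y ∧ y 0 ≠ 0 ∧
        (∀ θ : ℝ, deriv y θ = 2 * (Real.pi : ℂ) * Complex.I * (r : ℂ) * y θ) ∧
        (∀ θ φ : ℝ, Complex.exp (-(2 * (Real.pi : ℂ) * Complex.I * (m : ℂ) * (φ : ℂ)))
            * y (θ + φ)
          = Complex.exp (2 * (Real.pi : ℂ) * Complex.I * (γ : ℂ) * (φ : ℂ)) * y θ)}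
      = if 0 ≤ m + γ ∧ m + γ ≤ (k : ℤ) then {((m + γ : ℤ) : ℝ)} else (∅ : Set ℝ) := by
  simp only [weight_key]
  ext r
  split_ifs with h
  · simp only [Set.mem_setOf_eq, Set.mem_singleton_iff, and_iff_right_iff_imp]
    rintro rfl
    exact ⟨by exact_mod_cast h.1, by exact_mod_cast h.2⟩
  · simp only [Set.mem_setOf_eq, Set.mem_empty_iff_false, iff_false]
    rintro ⟨⟨h1, h2⟩, rfl⟩
    exact h ⟨by exact_mod_cast h1, by exact_mod_cast h2⟩
end

section
/- Let z = (z₀, z₁) and w = (w₀, w₁) be nonzero vectors in ℂ². There exists a complex number h with |h| = 1 such that the projective points satisfy [w₀ : w₁] = [z₀ : h z₁] if and only if |z₁|²·(|w₀|² + |w₁|²) = |w₁|²·(|z₀|² + |z₁|²). -/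
open scoped LinearAlgebra.Projectivization

/-- For nonzero `z = (z₀, z₁)` and `w = (w₀, w₁)` in `ℂ²`, there is
`h ∈ S¹` with `[w₀ : w₁] = [z₀ : h z₁]` iff
`|z₁|²(|w₀|² + |w₁|²) = |w₁|²(|z₀|² + |z₁|²)`. -/
theorem orbit_invariant_CP1 (z w : ℂ × ℂ) (hz : z ≠ 0) (hw : w ≠ 0) :
    (∃ h : ℂ, ‖h‖ = 1 ∧ ∃ hne : (z.1, h * z.2) ≠ (0 : ℂ × ℂ),
        Projectivization.mk ℂ w hw = Projectivization.mk ℂ (z.1, h * z.2) hne)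
    ↔ ‖z.2‖ ^ 2 * (‖w.1‖ ^ 2 + ‖w.2‖ ^ 2)
        = ‖w.2‖ ^ 2 * (‖z.1‖ ^ 2 + ‖z.2‖ ^ 2) := by
  obtain ⟨a, b⟩ := z
  obtain ⟨c, d⟩ := w
  simp only [Projectivization.mk_eq_mk_iff', Prod.smul_mk, smul_eq_mul, Prod.mk.injEq]
  have hz' : ¬ (a = 0 ∧ b = 0) := fun h => hz (Prod.ext h.1 h.2)
  have hw' : ¬ (c = 0 ∧ d = 0) := fun h => hw (Prod.ext h.1 h.2)
  constructor
  · rintro ⟨h, hh, -, t, rfl, rfl⟩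
    simp only [norm_mul, hh]
    ring
  · intro E
    have hn : ‖b‖ * ‖c‖ = ‖d‖ * ‖a‖ := by
      have h2 : (‖b‖ * ‖c‖) ^ 2 = (‖d‖ * ‖a‖) ^ 2 := by linarith
      exact (pow_left_inj₀ (by positivity) (by positivity) two_ne_zero).1 h2
    have key : ∀ h : ℂ, ‖h‖ = 1 → (a, h * b) ≠ (0 : ℂ × ℂ) := by
      intro h hh H
      have h0 : h ≠ 0 := by
        rintro rfl
        simp at hh
      have H1 := congrArg Prod.fst H
      have H2 := congrArg Prod.snd H
      simp only [Prod.fst_zero, Prod.snd_zero, mul_eq_zero, h0, false_or] at H1 H2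
      exact hz' ⟨H1, H2⟩
    suffices hs : ∃ h : ℂ, ‖h‖ = 1 ∧ ∃ t : ℂ, t * a = c ∧ t * (h * b) = d by
      obtain ⟨h, hh, ht⟩ := hs
      exact ⟨h, hh, key h hh, ht⟩
    by_cases ha : a = 0
    · subst ha
      have hb : b ≠ 0 := fun h => hz' ⟨rfl, h⟩
      have hc : c = 0 := by simpa [hb] using hn
      exact ⟨1, by simp, d / b, by simp [hc], by field_simp⟩
    · by_cases hb : b = 0
      · subst hb
        have hd : d = 0 := by simpa [ha] using hn.symm
        exact ⟨1, by simp, c / a, by field_simp, by simp [hd]⟩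
      · have hc : c ≠ 0 := by
          rintro rfl
          have hd : d = 0 := by simpa [ha] using hn.symm
          exact hw' ⟨rfl, hd⟩
        refine ⟨d * a / (b * c), ?_, c / a, by field_simp, by field_simp⟩
        rw [norm_div, norm_mul, norm_mul, ← hn]
        exact div_self (by simp [hb, hc])
end
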